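/- Let S be an ordered semigroup with real multiplication satisfying axioms O1–O6. If f', f, g₁, g₂ ∈ S are such that f' ≪ f ≤ g₁ + g₂, then there exist h₁, h₂ ∈ S such that f' ≪ h₁ + h₂ ≪ f, h₁ ≤ g₁, and h₂ ≤ g₂. -/

import Mathlib

open scoped ENNReal

/-- `CC s t` : `s` is (sequentially) compactly contained in `t`, written `s ≪ t`. -/
def CC {S : Type*} [AddCommMonoid S] [PartialOrder S] (s t : S) : Prop :=
  ∀ u : ℕ → S, Monotone u → ∀ x : S, IsLUB (Set.range u) x → t ≤ x → ∃ n, s ≤ u n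

/-- An ordered semigroup (positive, with translation invariant order) satisfying axioms O1-O5. -/
structure CuO5 (S : Type*) [AddCommMonoid S] [PartialOrder S] : Prop where
  addRightMono : ∀ {s t : S}, s ≤ t → ∀ r : S, s + r ≤ t + r
  zeroLe : ∀ s : S, 0 ≤ s
  O1 : ∀ u : ℕ → S, Monotone u → ∃ x : S, IsLUB (Set.range u) x
  O2 : ∀ s : S, ∃ u : ℕ → S, (∀ n, CC (u n) (u (n + 1))) ∧ IsLUB (Set.range u) s
  O3 : ∀ {s₁ t₁ s₂ t₂ : S}, CC s₁ t₁ → CC s₂ t₂ → CC (s₁ + s₂) (t₁ + t₂)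
  O4 : ∀ u v : ℕ → S, Monotone u → Monotone v → ∀ x y : S,
    IsLUB (Set.range u) x → IsLUB (Set.range v) y →
    IsLUB (Set.range fun n => u n + v n) (x + y)
  O5 : ∀ {s' s t : S}, CC s' s → s ≤ t → ∃ r : S, s' + r ≤ t ∧ t ≤ s + r

/-- Axioms O1-O6. -/
structure CuO6 (S : Type*) [AddCommMonoid S] [PartialOrder S] extends CuO5 S : Prop where
  O6 : ∀ {s r t : S}, s ≤ r + t → ∀ {s' : S}, CC s' s →
    ∃ r' t' : S, s' ≤ r' + t' ∧ r' ≤ r ∧ r' ≤ s ∧ t' ≤ t ∧ t' ≤ s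

/-- A functional on `S`: additive, order preserving, zero preserving map to `[0,∞]`
preserving suprema of increasing sequences. -/
structure IsFunctional {S : Type*} [AddCommMonoid S] [PartialOrder S] (l : S → ℝ≥0∞) : Prop where
  map_zero : l 0 = 0
  map_add : ∀ s t : S, l (s + t) = l s + l t
  mono : ∀ {s t : S}, s ≤ t → l s ≤ l t
  map_sup : ∀ u : ℕ → S, Monotone u → ∀ x : S, IsLUB (Set.range u) x → l x = ⨆ n, l (u n)

/-- Real multiplication on `S` : a map `(0,∞] × S → S` additive, order preserving and
sup-(of increasing sequences)-preserving in each variable, with `1 · s = s`.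
Scalars are elements of `ℝ≥0∞` required to be positive. -/
structure RealMul (S : Type*) [AddCommMonoid S] [PartialOrder S] where
  smul : ℝ≥0∞ → S → S
  add_left : ∀ {a b : ℝ≥0∞}, 0 < a → 0 < b → ∀ s : S, smul (a + b) s = smul a s + smul b s
  add_right : ∀ {a : ℝ≥0∞}, 0 < a → ∀ s t : S, smul a (s + t) = smul a s + smul a t
  mono_left : ∀ {a b : ℝ≥0∞}, 0 < a → a ≤ b → ∀ s : S, smul a s ≤ smul b s
  mono_right : ∀ {a : ℝ≥0∞}, 0 < a → ∀ {s t : S}, s ≤ t → smul a s ≤ smul a t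
  sup_left : ∀ u : ℕ → ℝ≥0∞, Monotone u → 0 < u 0 → ∀ s : S,
    IsLUB (Set.range fun n => smul (u n) s) (smul (⨆ n, u n) s)
  sup_right : ∀ {a : ℝ≥0∞}, 0 < a → ∀ u : ℕ → S, Monotone u → ∀ x : S,
    IsLUB (Set.range u) x → IsLUB (Set.range fun n => smul a (u n)) (smul a x)
  one_smul : ∀ s : S, smul 1 s = s

/-- `D` is a dense subset of `S`: every element of `S` is the supremum of a rapidly
increasing sequence of elements of `D`. -/
def IsDenseSub {S : Type*} [AddCommMonoid S] [PartialOrder S] (D : Set S) : Prop :=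
  ∀ s : S, ∃ u : ℕ → S, (∀ n, u n ∈ D) ∧ (∀ n, CC (u n) (u (n + 1))) ∧ IsLUB (Set.range u) s

/-- `m` is the least upper bound of the functionals `l₁` and `l₂` in `F(S)`
(pointwise order). -/
def IsFSup {S : Type*} [AddCommMonoid S] [PartialOrder S] (l₁ l₂ m : S → ℝ≥0∞) : Prop :=
  IsFunctional m ∧ (∀ s, l₁ s ≤ m s) ∧ (∀ s, l₂ s ≤ m s) ∧
    ∀ d : S → ℝ≥0∞, IsFunctional d → (∀ s, l₁ s ≤ d s) → (∀ s, l₂ s ≤ d s) → ∀ s, m s ≤ d s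

/-- `m` is the greatest lower bound of the functionals `l₁` and `l₂` in `F(S)`
(pointwise order). -/
def IsFInf {S : Type*} [AddCommMonoid S] [PartialOrder S] (l₁ l₂ m : S → ℝ≥0∞) : Prop :=
  IsFunctional m ∧ (∀ s, m s ≤ l₁ s) ∧ (∀ s, m s ≤ l₂ s) ∧
    ∀ d : S → ℝ≥0∞, IsFunctional d → (∀ s, d s ≤ l₁ s) → (∀ s, d s ≤ l₂ s) → ∀ s, d s ≤ m s

/-- An isomorphism of ordered semigroups between `S` and the extended natural numbers. -/
def IsOrdSemigroupIso {S : Type*} [AddCommMonoid S] [PartialOrder S] (e : S ≃ ℕ∞) : Prop :=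
  (∀ a b : S, e (a + b) = e a + e b) ∧ e 0 = 0 ∧ ∀ a b : S, a ≤ b ↔ e a ≤ e b

/-!
By O6, `f' ≪ f ≤ g₁ + g₂` gives parts of `g₁` and `g₂` below `f`, whose halves `p₁ ≤ g₁` and
`p₂ ≤ g₂` satisfy `f' / 2 ≤ p₁ + p₂ ≤ f`. Subtracting them by O5 leaves remainders `u`, `v`, `c` of
`g₁`, `g₂`, `f`, and `c ≤ u + v` after cancelling `p₁ + p₂`, so the same can be done with `c` in
place of `f`. After `n` rounds all but a fraction `2⁻ⁿ` of `f'` is exhausted. O5 only subtracts up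
to an error, which is made a small multiple of `g₁`, `g₂`, `f` by averaging a rapidly increasing
sequence, and is absorbed by shrinking the result by a factor close to `1`.
-/

open scoped NNReal

namespace CC

variable {S T : Type*} [AddCommMonoid S] [PartialOrder S] [AddCommMonoid T] [PartialOrder T]
  {a b c : S}

lemma trans_le (hab : CC a b) (hbc : b ≤ c) : CC a c :=
  fun u hu x hx hcx => hab u hu x hx (hbc.trans hcx)

lemma of_le (hab : a ≤ b) (hbc : CC b c) : CC a c :=
  fun u hu x hx hcx => (hbc u hu x hx hcx).imp fun _ => hab.trans

lemma le (hab : CC a b) : a ≤ b :=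
  (hab (fun _ => b) monotone_const b (by simp) le_rfl).choose_spec

lemma map_orderIso (e : S ≃o T) (hab : CC a b) : CC (e a) (e b) := by
  intro u hu x hx hbx
  have hlub : IsLUB (Set.range (e.symm ∘ u)) (e.symm x) := by
    rw [Set.range_comp]
    exact e.symm.isLUB_image'.2 hx
  obtain ⟨n, hn⟩ := hab _ (e.symm.monotone.comp hu) _ hlub (e.le_symm_apply.2 hbx)
  exact ⟨n, e.le_symm_apply.1 hn⟩

lemma smul [Module ℝ≥0 S] [PosSMulMono ℝ≥0 S] {r : ℝ≥0} (hr : 0 < r) (hab : CC a b) :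
    CC (r • a) (r • b) :=
  hab.map_orderIso (OrderIso.smulRight hr)

end CC

lemma monotone_of_forall_cc {S : Type*} [AddCommMonoid S] [PartialOrder S] {u : ℕ → S}
    (hu : ∀ n, CC (u n) (u (n + 1))) : Monotone u :=
  monotone_nat_of_le_succ fun n => (hu n).le

namespace CuO5

variable {S : Type*} [AddCommMonoid S] [PartialOrder S]

lemma isOrderedAddMonoid (hS : CuO5 S) : IsOrderedAddMonoid S where
  add_le_add_left _ _ h c := hS.addRightMono h c

lemma zero_cc (hS : CuO5 S) (a : S) : CC 0 a :=
  fun u _ _ _ _ => ⟨0, hS.zeroLe (u 0)⟩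

lemma sum_cc_sum (hS : CuO5 S) {ι : Type*} (s : Finset ι) {u v : ι → S} (h : ∀ i, CC (u i) (v i)) :
    CC (∑ i ∈ s, u i) (∑ i ∈ s, v i) := by
  induction s using Finset.cons_induction with
  | empty => exact hS.zero_cc _
  | cons i s hi ih => simpa only [Finset.sum_cons] using hS.O3 (h i) ih

lemma exists_rapid_between (hS : CuO5 S) {a b : S} (h : CC a b) :
    ∃ u : ℕ → S, a ≤ u 0 ∧ (∀ n, CC (u n) (u (n + 1))) ∧ ∀ n, CC (u n) b := by
  obtain ⟨u, hu, hub⟩ := hS.O2 b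
  obtain ⟨k, hk⟩ := h u (monotone_of_forall_cc hu) b hub le_rfl
  exact ⟨fun n => u (k + n), hk, fun n => hu (k + n),
    fun n => (hu (k + n)).trans_le (hub.1 ⟨_, rfl⟩)⟩

lemma exists_between (hS : CuO5 S) {a b : S} (h : CC a b) : ∃ c, CC a c ∧ CC c b := by
  obtain ⟨u, hau, hu, hub⟩ := hS.exists_rapid_between h
  exact ⟨u 1, .of_le hau (hu 0), hub 1⟩

lemma exists_le_add_of_cc_add (hS : CuO5 S) {s x y : S} (h : CC s (x + y)) :
    ∃ x' y', CC x' x ∧ CC y' y ∧ s ≤ x' + y' := by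
  have := hS.isOrderedAddMonoid
  obtain ⟨u, hu, hux⟩ := hS.O2 x
  obtain ⟨v, hv, hvy⟩ := hS.O2 y
  have hu_mono := monotone_of_forall_cc hu
  have hv_mono := monotone_of_forall_cc hv
  obtain ⟨n, hn⟩ := h _ (hu_mono.add hv_mono) _ (hS.O4 u v hu_mono hv_mono x y hux hvy) le_rfl
  exact ⟨u n, v n, (hu n).trans_le (hux.1 ⟨_, rfl⟩), (hv n).trans_le (hvy.1 ⟨_, rfl⟩), hn⟩

end CuO5

/-- Every element is the supremum of an increasing sequence of its multiples by scalars less than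
one. This is the part of the continuity of a real multiplication in the scalar that refinement
depends on. -/
def IsScalingContinuous (S : Type*) [PartialOrder S] [SMul ℝ≥0 S] : Prop :=
  ∀ s : S, ∃ u : ℕ → ℝ≥0, Monotone u ∧ (∀ n, u n < 1) ∧ IsLUB (Set.range fun n => u n • s) s

namespace RealMul

variable {S : Type*} [AddCommMonoid S] [PartialOrder S] {a b : ℝ≥0∞} {n : ℕ}

lemma smul_nsmul (rm : RealMul S) (ha : 0 < a) (hn : n ≠ 0) (s : S) :
    rm.smul a (n • s) = n • rm.smul a s := by
  induction n, Nat.one_le_iff_ne_zero.2 hn using Nat.le_induction with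
  | base => simp
  | succ n hn ih => rw [succ_nsmul, rm.add_right ha, ih (by lia), succ_nsmul]

lemma natCast_mul_smul (rm : RealMul S) (ha : 0 < a) (hn : n ≠ 0) (s : S) :
    rm.smul (n * a) s = n • rm.smul a s := by
  induction n, Nat.one_le_iff_ne_zero.2 hn using Nat.le_induction with
  | base => simp
  | succ n hn ih =>
    have hna : 0 < n * a := ENNReal.mul_pos (by simp; lia) ha.ne'
    rw [Nat.cast_succ, add_one_mul, rm.add_left hna ha, ih (by lia), succ_nsmul]

lemma natCast_smul (rm : RealMul S) (hn : n ≠ 0) (s : S) : rm.smul n s = n • s := by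
  simpa [rm.one_smul] using rm.natCast_mul_smul one_pos hn s

lemma nsmul_injective (rm : RealMul S) (hn : n ≠ 0) : Function.Injective fun s : S => n • s := by
  have hn_inv : (0 : ℝ≥0∞) < (n : ℝ≥0∞)⁻¹ := by simp
  refine Function.LeftInverse.injective (g := rm.smul (n : ℝ≥0∞)⁻¹) fun s => ?_
  rw [rm.smul_nsmul hn_inv hn, ← rm.natCast_mul_smul hn_inv hn,
    ENNReal.mul_inv_cancel (by simpa) (ENNReal.natCast_ne_top n), rm.one_smul]

lemma smul_smul_of_natCast_mul_eq (rm : RealMul S) (ha : 0 < a) (hb : 0 < b) {m k : ℕ}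
    (hm : m ≠ 0) (hmb : m * b = k) (s : S) : rm.smul a (rm.smul b s) = rm.smul (a * b) s := by
  have hk : k ≠ 0 := by
    rintro rfl
    simp [hm, hb.ne'] at hmb
  refine rm.nsmul_injective hm ?_
  calc m • rm.smul a (rm.smul b s)
      = rm.smul a (rm.smul (m * b) s) := by
        rw [rm.natCast_mul_smul hb hm, rm.smul_nsmul ha hm]
    _ = rm.smul (k * a) s := by
        rw [hmb, rm.natCast_smul hk, rm.smul_nsmul ha hk, rm.natCast_mul_smul ha hk]
    _ = rm.smul (m * (a * b)) s := by rw [← hmb, mul_right_comm, mul_assoc]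
    _ = m • rm.smul (a * b) s := rm.natCast_mul_smul (ENNReal.mul_pos ha.ne' hb.ne') hm s

lemma dense_setOf_natCast_mul_eq :
    Dense {b : ℝ≥0∞ | ∃ m k : ℕ, m ≠ 0 ∧ m * b = k} := by
  refine dense_of_exists_between fun x y hxy => ?_
  obtain ⟨q, hq, hxq, hqy⟩ := ENNReal.lt_iff_exists_rat_btwn.1 hxy
  refine ⟨_, ⟨q.den, q.num.toNat, q.den_nz, ?_⟩, hxq, hqy⟩
  lift q to ℚ≥0 using hq
  have hq_coe : ((q : ℚ) : ℝ).toNNReal = (q : ℝ≥0) := by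
    exact_mod_cast Real.toNNReal_coe (r := q)
  rw [hq_coe, NNRat.den_coe, NNRat.num_coe, Int.toNat_natCast]
  exact_mod_cast NNRat.den_mul_eq_num q

lemma smul_smul (rm : RealMul S) (ha : 0 < a) (hb : 0 < b) (s : S) :
    rm.smul a (rm.smul b s) = rm.smul (a * b) s := by
  obtain ⟨u, hu, hu_mem, hub⟩ :=
    dense_setOf_natCast_mul_eq.exists_seq_strictMono_tendsto_of_lt hb
  have hu_pos (n : ℕ) : 0 < u n := (hu_mem n).1.1
  have hub_sup : ⨆ n, u n = b := iSup_eq_of_tendsto hu.monotone hub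
  have hleft : IsLUB (Set.range fun n => rm.smul (a * u n) s) (rm.smul (a * b) s) := by
    rw [← hub_sup, ENNReal.mul_iSup]
    exact rm.sup_left _ (fun _ _ h => by gcongr; exact hu.monotone h)
      (ENNReal.mul_pos ha.ne' (hu_pos 0).ne') s
  have hright : IsLUB (Set.range fun n => rm.smul a (rm.smul (u n) s))
      (rm.smul a (rm.smul b s)) := by
    refine rm.sup_right ha _ (fun i _ h => rm.mono_left (hu_pos i) (hu.monotone h) s) _ ?_
    rw [← hub_sup]
    exact rm.sup_left u hu.monotone (hu_pos 0) s
  refine hright.unique ?_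
  convert hleft using 3 with n
  obtain ⟨m, k, hm, hmu⟩ := (hu_mem n).2
  exact rm.smul_smul_of_natCast_mul_eq ha (hu_pos n) hm hmu s

lemma smul_zero (rm : RealMul S) (hS : CuO5 S) (ha : 0 < a) (ha_top : a ≠ ∞) :
    rm.smul a 0 = 0 := by
  refine le_antisymm ?_ (hS.zeroLe _)
  calc rm.smul a 0 ≤ rm.smul a (rm.smul a⁻¹ 0) := rm.mono_right ha (hS.zeroLe _)
    _ = 0 := by
      rw [rm.smul_smul ha (ENNReal.inv_pos.2 ha_top), ENNReal.mul_inv_cancel ha.ne' ha_top,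
        rm.one_smul]

/-- The `ℝ≥0`-module structure underlying a real multiplication, with `0 • s = 0`. -/
noncomputable abbrev nnrealModule (rm : RealMul S) (hS : CuO5 S) : Module ℝ≥0 S where
  smul r s := if r = 0 then 0 else rm.smul r s
  one_smul s := (if_neg one_ne_zero).trans (rm.one_smul s)
  zero_smul s := if_pos rfl
  mul_smul r r' s := by
    change ite (r * r' = 0) 0 _ = ite (r = 0) 0 (rm.smul r (ite (r' = 0) 0 _))
    by_cases hr : r = 0
    · simp [hr]
    by_cases hr' : r' = 0
    · simp [hr, hr', rm.smul_zero hS (ENNReal.coe_pos.2 (pos_iff_ne_zero.2 hr))]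
    · simp [hr, hr', rm.smul_smul, pos_iff_ne_zero]
  smul_zero r := by
    change ite (r = 0) 0 _ = 0
    by_cases hr : r = 0
    · simp [hr]
    · simp [hr, rm.smul_zero hS, pos_iff_ne_zero]
  smul_add r s t := by
    change ite (r = 0) 0 _ = ite (r = 0) 0 _ + ite (r = 0) 0 _
    by_cases hr : r = 0
    · simp [hr]
    · simp [hr, rm.add_right, pos_iff_ne_zero]
  add_smul r r' s := by
    change ite (r + r' = 0) 0 _ = ite (r = 0) 0 _ + ite (r' = 0) 0 _
    by_cases hr : r = 0
    · simp [hr]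
    by_cases hr' : r' = 0
    · simp [hr']
    · simp [hr, hr', rm.add_left, pos_iff_ne_zero]

lemma nnrealModule_smul (rm : RealMul S) (hS : CuO5 S) {r : ℝ≥0} (hr : r ≠ 0) (s : S) :
    letI := rm.nnrealModule hS
    r • s = rm.smul r s :=
  if_neg hr

lemma isOrderedModule (rm : RealMul S) (hS : CuO5 S) :
    letI := rm.nnrealModule hS
    IsOrderedModule ℝ≥0 S := by
  let _ := rm.nnrealModule hS
  have := hS.isOrderedAddMonoid
  refine { smul_le_smul_of_nonneg_left := fun r _ s t hst => ?_
           smul_le_smul_of_nonneg_right := fun s _ r r' hrr' => ?_ }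
  · rcases eq_or_ne r 0 with rfl | hr
    · simp
    · simpa only [rm.nnrealModule_smul hS hr] using rm.mono_right (by positivity) hst
  · obtain ⟨c, rfl⟩ := exists_add_of_le hrr'
    rw [add_smul]
    exact le_add_of_nonneg_right (hS.zeroLe _)

lemma isScalingContinuous (rm : RealMul S) (hS : CuO5 S) :
    letI := rm.nnrealModule hS
    IsScalingContinuous S := by
  let _ := rm.nnrealModule hS
  intro s
  obtain ⟨u, hu, hu_mem, hu_lim⟩ := exists_seq_strictMono_tendsto' (zero_lt_one (α := ℝ≥0))
  refine ⟨u, hu.monotone, fun n => (hu_mem n).2, ?_⟩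
  have hu_pos (n : ℕ) : 0 < u n := (hu_mem n).1
  have hu_mono : Monotone fun n => (u n : ℝ≥0∞) := ENNReal.coe_mono.comp hu.monotone
  have h := rm.sup_left _ hu_mono (ENNReal.coe_pos.2 (hu_pos 0)) s
  rw [iSup_eq_of_tendsto hu_mono (ENNReal.tendsto_coe.2 hu_lim), ENNReal.coe_one,
    rm.one_smul] at h
  simpa only [rm.nnrealModule_smul hS (hu_pos _).ne'] using h

end RealMul

lemma nsmul_add_le_nsmul_add {S : Type*} [AddCommMonoid S] [PartialOrder S]
    [IsOrderedAddMonoid S] {x y z : S} (h : x + z ≤ y + z) (n : ℕ) :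
    n • x + z ≤ n • y + z := by
  induction n with
  | zero => simp
  | succ n ih =>
    calc (n + 1) • x + z = (n • x + z) + x := by rw [succ_nsmul, add_right_comm]
      _ ≤ (n • y + z) + x := by gcongr
      _ = n • y + (x + z) := by abel
      _ ≤ n • y + (y + z) := by gcongr
      _ = (n + 1) • y + z := by rw [succ_nsmul, add_assoc]

section Complement

variable {S : Type*} [AddCommMonoid S] [PartialOrder S] [Module ℝ≥0 S]

lemma IsScalingContinuous.le_of_forall_lt_one_smul_le (hc : IsScalingContinuous S) {x y : S}
    (h : ∀ r : ℝ≥0, r < 1 → r • x ≤ y) : x ≤ y := by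
  obtain ⟨u, -, hu, hux⟩ := hc x
  exact hux.2 (Set.forall_mem_range.2 fun n => h (u n) (hu n))

lemma IsScalingContinuous.exists_lt_one_le_smul [SMulPosMono ℝ≥0 S]
    (hc : IsScalingContinuous S) (hS : CuO5 S) {s t : S} (h : CC s t) :
    ∃ r : ℝ≥0, r < 1 ∧ s ≤ r • t := by
  obtain ⟨u, hu_mono, hu, hut⟩ := hc t
  obtain ⟨n, hn⟩ := h _
    (fun _ _ hij => smul_le_smul_of_nonneg_right (hu_mono hij) (hS.zeroLe t)) t hut le_rfl
  exact ⟨u n, hu n, hn⟩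

lemma IsScalingContinuous.le_of_add_le_add_right [IsOrderedModule ℝ≥0 S]
    (hc : IsScalingContinuous S) (hS : CuO5 S) {x y z : S} {c : ℝ≥0} (h : x + z ≤ y + z)
    (hz : z ≤ c • y) : x ≤ y := by
  have := hS.isOrderedAddMonoid
  refine hc.le_of_forall_lt_one_smul_le fun r hr => ?_
  obtain ⟨n, hn, hrn⟩ : ∃ n : ℕ, 0 < (n : ℝ≥0) ∧ r * (n + c) ≤ n := by
    obtain ⟨δ, hδ, hrδ⟩ := exists_pos_add_of_lt' hr
    obtain ⟨n, hn⟩ := exists_nat_gt (r * c / δ)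
    refine ⟨n, zero_le.trans_lt hn, ?_⟩
    calc r * (n + c) = r * n + r * c := mul_add _ _ _
      _ ≤ r * n + n * δ := add_le_add_right ((div_le_iff₀ hδ).1 hn.le) _
      _ = (r + δ) * n := by ring
      _ = n := by rw [hrδ, one_mul]
  have hxy : (n : ℝ≥0) • x ≤ (n + c) • y :=
    calc (n : ℝ≥0) • x = n • x := Nat.cast_smul_eq_nsmul _ _ _
      _ ≤ n • x + z := le_add_of_nonneg_right (hS.zeroLe z)
      _ ≤ n • y + z := nsmul_add_le_nsmul_add h n
      _ ≤ n • y + c • y := by gcongr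
      _ = (n + c) • y := by rw [add_smul, Nat.cast_smul_eq_nsmul]
  refine (smul_le_smul_iff_of_pos_left hn).1 ?_
  calc (n : ℝ≥0) • r • x = r • (n : ℝ≥0) • x := smul_comm _ _ _
    _ ≤ r • (n + c) • y := by gcongr
    _ = (r * (n + c)) • y := smul_smul _ _ _
    _ ≤ (n : ℝ≥0) • y := smul_le_smul_of_nonneg_right hrn (hS.zeroLe y)

/-- `p` is compactly contained in some `q ≤ t` exceeding `p` by at most `e • t`; then O5 provides a
complement of `p` in `t` up to the error `e • t`. -/
def NearlyBelow (e : ℝ≥0) (p t : S) : Prop :=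
  ∃ q, CC p q ∧ q ≤ t ∧ q ≤ p + e • t

namespace NearlyBelow

variable {e : ℝ≥0} {p p₁ p₂ t t₁ t₂ : S}

lemma trans_le [IsOrderedAddMonoid S] [PosSMulMono ℝ≥0 S] (h : NearlyBelow e p t₁) (ht : t₁ ≤ t₂) :
    NearlyBelow e p t₂ := by
  obtain ⟨q, hpq, hqt, hq⟩ := h
  exact ⟨q, hpq, hqt.trans ht, hq.trans (by gcongr)⟩

lemma add (hS : CuO5 S) (h₁ : NearlyBelow e p₁ t₁) (h₂ : NearlyBelow e p₂ t₂) :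
    NearlyBelow e (p₁ + p₂) (t₁ + t₂) := by
  have := hS.isOrderedAddMonoid
  obtain ⟨q₁, hpq₁, hqt₁, hq₁⟩ := h₁
  obtain ⟨q₂, hpq₂, hqt₂, hq₂⟩ := h₂
  refine ⟨q₁ + q₂, hS.O3 hpq₁ hpq₂, add_le_add hqt₁ hqt₂, (add_le_add hq₁ hq₂).trans_eq ?_⟩
  rw [smul_add, add_add_add_comm]

lemma smul [PosSMulMono ℝ≥0 S] (h : NearlyBelow e p t) {r : ℝ≥0} (hr : 0 < r) :
    NearlyBelow e (r • p) (r • t) := by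
  obtain ⟨q, hpq, hqt, hq⟩ := h
  refine ⟨r • q, hpq.smul hr, by gcongr, ?_⟩
  calc r • q ≤ r • (p + e • t) := by gcongr
    _ = r • p + e • r • t := by rw [smul_add, smul_comm]

lemma exists_complement (hS : CuO5 S) (h : NearlyBelow e p t) :
    ∃ w, p + w ≤ t ∧ t ≤ p + w + e • t := by
  have := hS.isOrderedAddMonoid
  obtain ⟨q, hpq, hqt, hq⟩ := h
  obtain ⟨w, hpw, htw⟩ := hS.O5 hpq hqt
  refine ⟨w, hpw, ?_⟩
  calc t ≤ q + w := htw
    _ ≤ p + e • t + w := by gcongr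
    _ = p + w + e • t := add_right_comm _ _ _

end NearlyBelow

variable [IsOrderedModule ℝ≥0 S]

lemma CC.exists_le_nearlyBelow (hS : CuO5 S) {s s' : S} (h : CC s' s) {e : ℝ≥0} (he : 0 < e) :
    ∃ p, s' ≤ p ∧ NearlyBelow e p s := by
  have := hS.isOrderedAddMonoid
  obtain ⟨u, hs'u, hu, hus⟩ := hS.exists_rapid_between h
  obtain ⟨N, hN, hNe⟩ := NNReal.exists_nat_pos_inv_lt he
  have average (t : S) : (N : ℝ≥0)⁻¹ • ∑ _i ∈ Finset.range N, t = t := by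
    rw [Finset.sum_const, Finset.card_range, ← Nat.cast_smul_eq_nsmul ℝ≥0,
      inv_smul_smul₀ (by positivity)]
  -- The averages of `u 0, …, u (N - 1)` and of `u 1, …, u N` differ by `(u N - u 0) / N`.
  have hshift : ∑ i ∈ Finset.range N, u (i + 1) ≤ ∑ i ∈ Finset.range N, u i + s :=
    calc ∑ i ∈ Finset.range N, u (i + 1)
        ≤ ∑ i ∈ Finset.range N, u (i + 1) + u 0 := le_add_of_nonneg_right (hS.zeroLe _)
      _ = ∑ i ∈ Finset.range N, u i + u N := by
        rw [← Finset.sum_range_succ', Finset.sum_range_succ]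
      _ ≤ ∑ i ∈ Finset.range N, u i + s := by gcongr; exact (hus N).le
  refine ⟨(N : ℝ≥0)⁻¹ • ∑ i ∈ Finset.range N, u i, ?_,
    (N : ℝ≥0)⁻¹ • ∑ i ∈ Finset.range N, u (i + 1), ?_, ?_, ?_⟩
  · calc s' = (N : ℝ≥0)⁻¹ • ∑ _i ∈ Finset.range N, s' := (average s').symm
      _ ≤ _ := by
        gcongr with i
        exact hs'u.trans (monotone_of_forall_cc hu i.zero_le)
  · exact (hS.sum_cc_sum _ hu).smul (by positivity)
  · calc (N : ℝ≥0)⁻¹ • ∑ i ∈ Finset.range N, u (i + 1)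
        ≤ (N : ℝ≥0)⁻¹ • ∑ _i ∈ Finset.range N, s := by
          gcongr with i
          exact (hus (i + 1)).le
      _ = s := average s
  · calc (N : ℝ≥0)⁻¹ • ∑ i ∈ Finset.range N, u (i + 1)
        ≤ (N : ℝ≥0)⁻¹ • (∑ i ∈ Finset.range N, u i + s) := by gcongr
      _ = (N : ℝ≥0)⁻¹ • ∑ i ∈ Finset.range N, u i + (N : ℝ≥0)⁻¹ • s := smul_add _ _ _
      _ ≤ (N : ℝ≥0)⁻¹ • ∑ i ∈ Finset.range N, u i + e • s := by
        gcongr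
        exact hS.zeroLe s

lemma CuO6.exists_half_le_add_nearlyBelow (hS : CuO6 S) {f' f g₁ g₂ : S} (hf : CC f' f)
    (hfg : f ≤ g₁ + g₂) {e : ℝ≥0} (he : 0 < e) :
    ∃ p₁ p₂ : S, (2⁻¹ : ℝ≥0) • f' ≤ p₁ + p₂ ∧ NearlyBelow e p₁ g₁ ∧ NearlyBelow e p₂ g₂ ∧
      NearlyBelow e (p₁ + p₂) f := by
  have hS5 := hS.toCuO5
  have := hS5.isOrderedAddMonoid
  obtain ⟨f₁, hf₁, hf₁f⟩ := hS5.exists_between hf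
  obtain ⟨r, t, hrt, hrg, hrf, htg, htf⟩ := hS.O6 hfg hf₁f
  obtain ⟨r', t', hr', ht', hf'⟩ := hS5.exists_le_add_of_cc_add (hf₁.trans_le hrt)
  obtain ⟨p₁, hp₁, hpr⟩ := hr'.exists_le_nearlyBelow hS5 he
  obtain ⟨p₂, hp₂, hpt⟩ := ht'.exists_le_nearlyBelow hS5 he
  have half_pos : (0 : ℝ≥0) < 2⁻¹ := by positivity
  have half_le (s : S) : (2⁻¹ : ℝ≥0) • s ≤ s :=
    smul_le_of_le_one_left (hS5.zeroLe s) (inv_le_one_of_one_le₀ one_le_two)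
  have half_add_le : (2⁻¹ : ℝ≥0) • r + (2⁻¹ : ℝ≥0) • t ≤ f :=
    calc (2⁻¹ : ℝ≥0) • r + (2⁻¹ : ℝ≥0) • t ≤ (2⁻¹ : ℝ≥0) • f + (2⁻¹ : ℝ≥0) • f := by gcongr
      _ = f := by rw [← add_smul, ← two_mul, mul_inv_cancel₀ two_ne_zero, one_smul]
  refine ⟨(2⁻¹ : ℝ≥0) • p₁, (2⁻¹ : ℝ≥0) • p₂, ?_,
    (hpr.smul half_pos).trans_le ((half_le r).trans hrg),
    (hpt.smul half_pos).trans_le ((half_le t).trans htg),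
    ((hpr.smul half_pos).add hS5 (hpt.smul half_pos)).trans_le half_add_le⟩
  rw [← smul_add]
  gcongr
  exact hf'.trans (add_le_add hp₁ hp₂)

lemma IsScalingContinuous.exists_remainders (hc : IsScalingContinuous S) (hS : CuO5 S)
    {e : ℝ≥0} (he : 0 < e) {p₁ p₂ g₁ g₂ f : S} (hp₁ : NearlyBelow e p₁ g₁)
    (hp₂ : NearlyBelow e p₂ g₂) (hp : NearlyBelow e (p₁ + p₂) f) (hfg : f ≤ g₁ + g₂) :
    ∃ u v c : S, p₁ + u ≤ (1 + 2 * e) • g₁ ∧ p₂ + v ≤ (1 + 2 * e) • g₂ ∧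
      p₁ + p₂ + c ≤ (1 + 2 * e) • f ∧ f ≤ p₁ + p₂ + c ∧ c ≤ u + v := by
  have := hS.isOrderedAddMonoid
  obtain ⟨u, hu, hgu⟩ := hp₁.exists_complement hS
  obtain ⟨v, hv, hgv⟩ := hp₂.exists_complement hS
  obtain ⟨c, hc_le, hfc⟩ := hp.exists_complement hS
  have hcuv : c ≤ u + v + e • (g₁ + g₂) := by
    refine hc.le_of_add_le_add_right hS (z := p₁ + p₂) (c := e⁻¹) ?_ ?_
    · calc c + (p₁ + p₂) = p₁ + p₂ + c := add_comm _ _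
        _ ≤ g₁ + g₂ := hc_le.trans hfg
        _ ≤ (p₁ + u + e • g₁) + (p₂ + v + e • g₂) := add_le_add hgu hgv
        _ = u + v + e • (g₁ + g₂) + (p₁ + p₂) := by module
    · calc p₁ + p₂ ≤ g₁ + g₂ := (le_add_of_nonneg_right (hS.zeroLe c)).trans (hc_le.trans hfg)
        _ = e⁻¹ • e • (g₁ + g₂) := (inv_smul_smul₀ he.ne' _).symm
        _ ≤ e⁻¹ • (u + v + e • (g₁ + g₂)) := by
          gcongr
          exact le_add_of_nonneg_left (hS.zeroLe _)
  have enlarge {x y g : S} (h : x + y ≤ g) : x + (y + (2 * e) • g) ≤ (1 + 2 * e) • g := by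
    rw [← add_assoc, add_smul, one_smul]
    gcongr
  refine ⟨u + (2 * e) • g₁, v + (2 * e) • g₂, c + e • f, enlarge hu, enlarge hv, ?_,
    by rwa [← add_assoc], ?_⟩
  · refine le_trans ?_ (enlarge hc_le)
    gcongr
    · exact hS.zeroLe f
    · exact le_mul_of_one_le_left zero_le one_le_two
  · calc c + e • f ≤ u + v + e • (g₁ + g₂) + e • (g₁ + g₂) := by gcongr
      _ = u + (2 * e) • g₁ + (v + (2 * e) • g₂) := by module

end Complement

section Refinement

/-- The refinement property of `S`, with `a • f'` in place of `f'` in the lower bound. -/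
def HasRefinementUpTo (S : Type*) [AddCommMonoid S] [PartialOrder S] [SMul ℝ≥0 S] (a : ℝ≥0) :
    Prop :=
  ∀ ⦃f' f g₁ g₂ : S⦄, CC f' f → f ≤ g₁ + g₂ →
    ∃ h₁ h₂ : S, a • f' ≤ h₁ + h₂ ∧ h₁ + h₂ ≤ f ∧ h₁ ≤ g₁ ∧ h₂ ≤ g₂

variable {S : Type*} [AddCommMonoid S] [PartialOrder S] [Module ℝ≥0 S]

lemma HasRefinementUpTo.zero (hS : CuO5 S) : HasRefinementUpTo S 0 :=
  fun f' f g₁ g₂ _ _ => ⟨0, 0, by simp, by simpa using hS.zeroLe f, hS.zeroLe g₁, hS.zeroLe g₂⟩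

lemma HasRefinementUpTo.anti [SMulPosMono ℝ≥0 S] (hS : CuO5 S) {a b : ℝ≥0} (hab : a ≤ b)
    (hb : HasRefinementUpTo S b) : HasRefinementUpTo S a := by
  intro f' f g₁ g₂ hf hfg
  obtain ⟨h₁, h₂, hle, h⟩ := hb hf hfg
  exact ⟨h₁, h₂, (smul_le_smul_of_nonneg_right hab (hS.zeroLe f')).trans hle, h⟩

lemma one_add_half_smul_le [IsOrderedAddMonoid S] [PosSMulMono ℝ≥0 S] {a : ℝ≥0}
    (ha : a ≤ 1) {s p c : S} (hp : (2⁻¹ : ℝ≥0) • s ≤ p) (hpc : s ≤ p + c) :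
    ((1 + a) / 2) • s ≤ p + a • c := by
  obtain ⟨b, hab⟩ := exists_add_of_le ha
  calc ((1 + a) / 2) • s = b • (2⁻¹ : ℝ≥0) • s + a • s := by
        rw [smul_smul, ← add_smul]
        congr 1
        rw [hab]
        ring
    _ ≤ b • p + a • (p + c) := by gcongr
    _ = (a + b) • p + a • c := by module
    _ = p + a • c := by rw [← hab, one_smul]

variable [IsOrderedModule ℝ≥0 S]

lemma HasRefinementUpTo.mul_one_add_half (hS : CuO6 S) (hc : IsScalingContinuous S)
    {a d : ℝ≥0} (h : HasRefinementUpTo S a) (ha : a ≤ 1) (hd : d < 1) :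
    HasRefinementUpTo S (d * ((1 + a) / 2)) := by
  intro f' f g₁ g₂ hf hfg
  have hS5 := hS.toCuO5
  have := hS5.isOrderedAddMonoid
  obtain ⟨e, he, hde⟩ : ∃ e : ℝ≥0, 0 < e ∧ d * (1 + 2 * e) ≤ 1 := by
    obtain ⟨δ, hδ, hdδ⟩ := exists_pos_add_of_lt' hd
    refine ⟨δ / 2, by positivity, ?_⟩
    calc d * (1 + 2 * (δ / 2)) = d + d * δ := by rw [mul_div_cancel₀ _ two_ne_zero, mul_one_add]
      _ ≤ d + δ := by gcongr; exact mul_le_of_le_one_left' hd.le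
      _ = 1 := hdδ
  have shrink {x y : S} (hxy : x ≤ (1 + 2 * e) • y) : d • x ≤ y :=
    calc d • x ≤ d • (1 + 2 * e) • y := by gcongr
      _ = (d * (1 + 2 * e)) • y := smul_smul _ _ _
      _ ≤ y := smul_le_of_le_one_left (hS5.zeroLe y) hde
  obtain ⟨p₁, p₂, hhalf, hp₁, hp₂, hp⟩ := hS.exists_half_le_add_nearlyBelow hf hfg he
  obtain ⟨u, v, c, hu, hv, hcf, hfc, hcuv⟩ := hc.exists_remainders hS5 he hp₁ hp₂ hp hfg
  obtain ⟨x, c', hx, hc', hf'⟩ := hS5.exists_le_add_of_cc_add (hf.trans_le hfc)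
  obtain ⟨k₁, k₂, hck, hkc, hk₁, hk₂⟩ := h hc' hcuv
  refine ⟨d • (p₁ + k₁), d • (p₂ + k₂), ?_, ?_, shrink (le_trans (by gcongr) hu),
    shrink (le_trans (by gcongr) hv)⟩
  · calc (d * ((1 + a) / 2)) • f' = d • ((1 + a) / 2) • f' := mul_smul _ _ _
      _ ≤ d • (p₁ + p₂ + a • c') := by
        gcongr
        exact one_add_half_smul_le ha hhalf (hf'.trans (by gcongr; exact hx.le))
      _ ≤ d • (p₁ + p₂ + (k₁ + k₂)) := by gcongr
      _ = d • (p₁ + k₁) + d • (p₂ + k₂) := by rw [add_add_add_comm, smul_add]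
  · rw [← smul_add, add_add_add_comm]
    exact shrink (le_trans (by gcongr) hcf)

lemma hasRefinementUpTo_mul_one_sub_pow (hS : CuO6 S) (hc : IsScalingContinuous S) (n : ℕ) :
    ∀ d : ℝ≥0, d < 1 → HasRefinementUpTo S (d * (1 - 2⁻¹ ^ n)) := by
  induction n with
  | zero => simpa using fun _ _ => HasRefinementUpTo.zero hS.toCuO5
  | succ n ih =>
    intro d hd
    obtain ⟨d₁, hdd₁, hd₁⟩ := exists_between hd
    have hd₁_pos : 0 < d₁ := zero_le.trans_lt hdd₁
    refine ((ih d₁ hd₁).mul_one_add_half hS hc (mul_le_one' hd₁.le tsub_le_self)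
      ((div_lt_one hd₁_pos).2 hdd₁)).anti hS.toCuO5 ?_
    have hpow : (2⁻¹ : ℝ≥0) ^ n ≤ 1 := pow_le_one' (inv_le_one_of_one_le₀ one_le_two) n
    obtain ⟨y, hy⟩ := exists_add_of_le hpow
    have hy_succ : (1 : ℝ≥0) - 2⁻¹ ^ (n + 1) = (1 + y) / 2 := by
      refine tsub_eq_of_eq_add ?_
      calc (1 : ℝ≥0) = (1 + 1) / 2 := by rw [one_add_one_eq_two, div_self two_ne_zero]
        _ = (1 + (2⁻¹ ^ n + y)) / 2 := by rw [← hy]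
        _ = (1 + y) / 2 + 2⁻¹ ^ (n + 1) := by ring
    calc d * (1 - 2⁻¹ ^ (n + 1)) = d / d₁ * ((d₁ + d₁ * y) / 2) := by
          rw [hy_succ]
          field_simp
      _ ≤ d / d₁ * ((1 + d₁ * y) / 2) := by gcongr
      _ = d / d₁ * ((1 + d₁ * (1 - 2⁻¹ ^ n)) / 2) := by rw [tsub_eq_of_eq_add_rev hy]

lemma hasRefinementUpTo_of_lt_one (hS : CuO6 S) (hc : IsScalingContinuous S) {a : ℝ≥0}
    (ha : a < 1) : HasRefinementUpTo S a := by
  obtain ⟨d, had, hd⟩ := exists_between ha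
  have had' : a / d < 1 := (div_lt_one (zero_le.trans_lt had)).2 had
  obtain ⟨n, hn⟩ := NNReal.exists_pow_lt_of_lt_one (tsub_pos_of_lt had')
    (inv_lt_one_of_one_lt₀ one_lt_two)
  refine (hasRefinementUpTo_mul_one_sub_pow hS hc n d hd).anti hS.toCuO5 ?_
  rw [← div_le_iff₀' (zero_le.trans_lt had)]
  exact le_tsub_of_add_le_right (add_le_of_le_tsub_left_of_le had'.le hn.le)

theorem CuO6.exists_cc_add_cc (hS : CuO6 S) (hc : IsScalingContinuous S) {f' f g₁ g₂ : S}
    (hf : CC f' f) (hfg : f ≤ g₁ + g₂) :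
    ∃ h₁ h₂ : S, CC f' (h₁ + h₂) ∧ CC (h₁ + h₂) f ∧ h₁ ≤ g₁ ∧ h₂ ≤ g₂ := by
  have hS5 := hS.toCuO5
  obtain ⟨f₁, hf₁, hf₁f⟩ := hS5.exists_between hf
  obtain ⟨f₂, hf₂, hf₂f⟩ := hS5.exists_between hf₁f
  obtain ⟨f₃, hf₃, hf₃f⟩ := hS5.exists_between hf₂f
  obtain ⟨a, ha, hfa⟩ := hc.exists_lt_one_le_smul hS5 hf₂
  obtain ⟨h₁, h₂, hle, hlef, hg₁, hg₂⟩ :=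
    hasRefinementUpTo_of_lt_one hS hc ha hf₃ (hf₃f.le.trans hfg)
  exact ⟨h₁, h₂, hf₁.trans_le (hfa.trans hle), .of_le hlef hf₃f, hg₁, hg₂⟩

end Refinement

/-- the basic case of the refinement property. -/
theorem refinement_two {S : Type*} [AddCommMonoid S] [PartialOrder S]
    (hS : CuO6 S) (rm : RealMul S) (f' f g₁ g₂ : S)
    (h₁ : CC f' f) (h₂ : f ≤ g₁ + g₂) :
    ∃ h₁ h₂ : S, CC f' (h₁ + h₂) ∧ CC (h₁ + h₂) f ∧ h₁ ≤ g₁ ∧ h₂ ≤ g₂ := by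
  have hS5 := hS.toCuO5
  let _ := rm.nnrealModule hS5
  have := hS5.isOrderedAddMonoid
  have := rm.isOrderedModule hS5
  exact hS.exists_cc_add_cc (rm.isScalingContinuous hS5) h₁ h₂
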